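/- Derivability is preserved backwards along decomposition: if Φ ⇝ Ψ are finite sets of CPL₀ labelled sequents and every sequent in Ψ is derivable in the proof system for CPL₀, then every sequent in Φ is derivable in the proof system for CPL₀. -/

import Mathlib

open MeasureTheory

/-- The Cantor space `2^ω` of infinite binary sequences. -/
abbrev Cantor : Type := ℕ → Bool

/-- Rational numbers in the unit interval `[0,1]`. -/
abbrev I01 : Type := (Set.Icc (0 : ℚ) 1)

/-- The value of a rational `q ∈ [0,1]` as an extended nonnegative real. -/
noncomputable def qq (q : I01) : ENNReal := ENNReal.ofReal (q.1 : ℝ)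

/-- `μ` is the fair-coin Bernoulli (uniform) product measure on the Cantor space:
it is a probability measure giving each cylinder fixing the values on a finite set `s`
of coordinates the measure `2^{-|s|}`. -/
def IsCantorMeasure (μ : Measure Cantor) : Prop :=
  IsProbabilityMeasure μ ∧
    ∀ (s : Finset ℕ) (v : ℕ → Bool),
      μ {f : Cantor | ∀ i ∈ s, f i = v i} = (2 : ENNReal)⁻¹ ^ s.card

/-- Boolean formulas `b ::= xᵢ | ⊤ | ⊥ | ¬b | b ∧ c | b ∨ c`. -/
inductive BF : Type where
  | var : ℕ → BF
  | tt : BF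
  | ff : BF
  | neg : BF → BF
  | conj : BF → BF → BF
  | disj : BF → BF → BF
deriving DecidableEq

/-- The interpretation `⟦b⟧ ⊆ 2^ω` of a Boolean formula. -/
def BF.sem : BF → Set Cantor
  | .var i => {f | f i = true}
  | .tt => Set.univ
  | .ff => ∅
  | .neg b => (BF.sem b)ᶜ
  | .conj b c => BF.sem b ∩ BF.sem c
  | .disj b c => BF.sem b ∪ BF.sem c

/-- Formulas of univariate counting propositional logic CPL₀:
`A ::= i | ¬A | A ∧ B | A ∨ B | C^q A | D^q A` with `q` a rational in `[0,1]`. -/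
inductive CPL0 : Type where
  | atom : ℕ → CPL0
  | neg : CPL0 → CPL0
  | conj : CPL0 → CPL0 → CPL0
  | disj : CPL0 → CPL0 → CPL0
  | cnt : I01 → CPL0 → CPL0
  | dnt : I01 → CPL0 → CPL0
deriving DecidableEq

open scoped Classical in
/-- The interpretation `⟦A⟧ ⊆ 2^ω` of a CPL₀ formula (relative to the measure `μ`). -/
noncomputable def CPL0.sem (μ : Measure Cantor) : CPL0 → Set Cantor
  | .atom i => {f | f i = true}
  | .neg A => (CPL0.sem μ A)ᶜ
  | .conj A B => CPL0.sem μ A ∩ CPL0.sem μ B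
  | .disj A B => CPL0.sem μ A ∪ CPL0.sem μ B
  | .cnt q A => if qq q ≤ μ (CPL0.sem μ A) then Set.univ else ∅
  | .dnt q A => if μ (CPL0.sem μ A) < qq q then Set.univ else ∅

/-- Labelled formulas: `b ↣ A` (`fwd`) and `b ↢ A` (`bwd`). -/
inductive LF : Type where
  | fwd : BF → CPL0 → LF
  | bwd : BF → CPL0 → LF
deriving DecidableEq

/-- Validity of a labelled formula: `b ↣ A` is valid when `⟦b⟧ ⊆ ⟦A⟧`,
and `b ↢ A` is valid when `⟦A⟧ ⊆ ⟦b⟧`. -/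
def LF.valid (μ : Measure Cantor) : LF → Prop
  | .fwd b A => BF.sem b ⊆ CPL0.sem μ A
  | .bwd b A => CPL0.sem μ A ⊆ BF.sem b

/-- The labelled, one-sided, single-succedent sequent calculus for CPL₀:
`Der μ L` means that the sequent `⊢ L` is derivable. -/
inductive Der (μ : Measure Cantor) : LF → Prop where
  | ax1 {b : BF} {n : ℕ} :
      BF.sem b ⊆ BF.sem (.var n) → Der μ (.fwd b (.atom n))
  | ax2 {b : BF} {n : ℕ} :
      BF.sem (.var n) ⊆ BF.sem b → Der μ (.bwd b (.atom n))
  | runion {b c d : BF} {A : CPL0} :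
      Der μ (.fwd c A) → Der μ (.fwd d A) →
      BF.sem b ⊆ BF.sem (.disj c d) → Der μ (.fwd b A)
  | rinter {b c d : BF} {A : CPL0} :
      Der μ (.bwd c A) → Der μ (.bwd d A) →
      BF.sem (.conj c d) ⊆ BF.sem b → Der μ (.bwd b A)
  | negF {b c : BF} {A : CPL0} :
      Der μ (.bwd c A) → BF.sem b ⊆ BF.sem (.neg c) → Der μ (.fwd b (.neg A))
  | negB {b c : BF} {A : CPL0} :
      Der μ (.fwd c A) → BF.sem (.neg c) ⊆ BF.sem b → Der μ (.bwd b (.neg A))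
  | disjF1 {b : BF} {A B : CPL0} :
      Der μ (.fwd b A) → Der μ (.fwd b (.disj A B))
  | disjF2 {b : BF} {A B : CPL0} :
      Der μ (.fwd b B) → Der μ (.fwd b (.disj A B))
  | disjB {b : BF} {A B : CPL0} :
      Der μ (.bwd b A) → Der μ (.bwd b B) → Der μ (.bwd b (.disj A B))
  | conjF {b : BF} {A B : CPL0} :
      Der μ (.fwd b A) → Der μ (.fwd b B) → Der μ (.fwd b (.conj A B))
  | conjB1 {b : BF} {A B : CPL0} :
      Der μ (.bwd b A) → Der μ (.bwd b (.conj A B))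
  | conjB2 {b : BF} {A B : CPL0} :
      Der μ (.bwd b B) → Der μ (.bwd b (.conj A B))
  | muF {b : BF} {A : CPL0} :
      μ (BF.sem b) = 0 → Der μ (.fwd b A)
  | muB {b : BF} {A : CPL0} :
      μ (BF.sem b) = 1 → Der μ (.bwd b A)
  | cntF {b c : BF} {q : I01} {A : CPL0} :
      Der μ (.fwd c A) → qq q ≤ μ (BF.sem c) → Der μ (.fwd b (.cnt q A))
  | cntB {b c : BF} {q : I01} {A : CPL0} :
      Der μ (.bwd c A) → μ (BF.sem c) < qq q → Der μ (.bwd b (.cnt q A))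
  | dntF {b c : BF} {q : I01} {A : CPL0} :
      Der μ (.bwd c A) → μ (BF.sem c) < qq q → Der μ (.fwd b (.dnt q A))
  | dntB {b c : BF} {q : I01} {A : CPL0} :
      Der μ (.fwd c A) → qq q ≤ μ (BF.sem c) → Der μ (.bwd b (.dnt q A))

/-- Sequents: either a labelled formula `⊢ L`, or the falsum sequent `⊢ ⊥`. -/
inductive Sequent : Type where
  | lf : LF → Sequent
  | falsum : Sequent
deriving DecidableEq

/-- Validity of a sequent: the falsum sequent `⊢ ⊥` is never valid. -/
def Sequent.valid (μ : Measure Cantor) : Sequent → Prop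
  | .lf L => L.valid μ
  | .falsum => False

/-- Derivability of a sequent: the falsum sequent `⊢ ⊥` is never derivable. -/
def Sequent.der (μ : Measure Cantor) : Sequent → Prop
  | .lf L => Der μ L
  | .falsum => False

/-- The one-step decomposition rewriting relation `⇝₀` from a sequent to a
finite set of sequents. -/
inductive Dec0 (μ : Measure Cantor) : Sequent → Finset Sequent → Prop where
  | negF {b c : BF} {A : CPL0} :
      BF.sem b ⊆ BF.sem (.neg c) →
      Dec0 μ (.lf (.fwd b (.neg A))) {Sequent.lf (.bwd c A)}
  | negB {b c : BF} {A : CPL0} :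
      BF.sem (.neg c) ⊆ BF.sem b →
      Dec0 μ (.lf (.bwd b (.neg A))) {Sequent.lf (.fwd c A)}
  | disjF {b c d : BF} {A B : CPL0} :
      BF.sem b ⊆ BF.sem (.disj c d) →
      Dec0 μ (.lf (.fwd b (.disj A B))) {Sequent.lf (.fwd c A), Sequent.lf (.fwd d B)}
  | disjB {b : BF} {A B : CPL0} :
      Dec0 μ (.lf (.bwd b (.disj A B))) {Sequent.lf (.bwd b A), Sequent.lf (.bwd b B)}
  | conjF {b : BF} {A B : CPL0} :
      Dec0 μ (.lf (.fwd b (.conj A B))) {Sequent.lf (.fwd b A), Sequent.lf (.fwd b B)}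
  | conjB {b c d : BF} {A B : CPL0} :
      BF.sem (.conj c d) ⊆ BF.sem b →
      Dec0 μ (.lf (.bwd b (.conj A B))) {Sequent.lf (.bwd c A), Sequent.lf (.bwd d B)}
  | cntF {b c : BF} {q : I01} {A : CPL0} :
      qq q ≤ μ (BF.sem c) →
      Dec0 μ (.lf (.fwd b (.cnt q A))) {Sequent.lf (.fwd c A)}
  | cntB {b c : BF} {q : I01} {A : CPL0} :
      μ (BF.sem c) < qq q →
      Dec0 μ (.lf (.bwd b (.cnt q A))) {Sequent.lf (.bwd c A)}
  | dntF {b c : BF} {q : I01} {A : CPL0} :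
      μ (BF.sem c) < qq q →
      Dec0 μ (.lf (.fwd b (.dnt q A))) {Sequent.lf (.bwd c A)}
  | dntB {b c : BF} {q : I01} {A : CPL0} :
      qq q ≤ μ (BF.sem c) →
      Dec0 μ (.lf (.bwd b (.dnt q A))) {Sequent.lf (.fwd c A)}
  | muF {b : BF} {A : CPL0} :
      μ (BF.sem b) = 0 → Dec0 μ (.lf (.fwd b A)) ∅
  | muB {b : BF} {A : CPL0} :
      μ (BF.sem b) = 1 → Dec0 μ (.lf (.bwd b A)) ∅
  | dnt0 {b : BF} {A : CPL0} :
      μ (BF.sem b) ≠ 0 → Dec0 μ (.lf (.fwd b (.dnt 0 A))) {Sequent.falsum}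
  | cnt0 {b : BF} {A : CPL0} :
      μ (BF.sem b) ≠ 1 → Dec0 μ (.lf (.bwd b (.cnt 0 A))) {Sequent.falsum}

/-- The set-decomposition relation `⇝` on finite sets of sequents:
`Φ ⇝ Ψ` when `Φ = Φ' ∪ {⊢ L}`, `⊢ L ⇝₀ Ψ'` and `Ψ = Φ' ∪ Ψ'`. -/
def Dec (μ : Measure Cantor) (Φ Ψ : Finset Sequent) : Prop :=
  ∃ (Φ' Ψ' : Finset Sequent) (s : Sequent),
    Dec0 μ s Ψ' ∧ Φ = insert s Φ' ∧ Ψ = Φ' ∪ Ψ'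

/-- A finite set of sequents is `⇝`-normal when no decomposition step applies to it. -/
def DecNormal (μ : Measure Cantor) (Φ : Finset Sequent) : Prop :=
  ¬ ∃ Ψ : Finset Sequent, Dec μ Φ Ψ

/-- **Backwards preservation of derivability.** If `Φ ⇝ Ψ` and every
sequent in `Ψ` is derivable in the proof system for CPL₀, then every sequent in `Φ`
is derivable in the proof system for CPL₀. -/
theorem cpl0_derivability_preserved_backwards
    (μ : Measure Cantor) (hμ : IsCantorMeasure μ)
    (Φ Ψ : Finset Sequent) (hdec : Dec μ Φ Ψ) (hΨ : ∀ s ∈ Ψ, s.der μ) :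
    ∀ s ∈ Φ, s.der μ := by
  obtain ⟨Φ', Ψ', t, h0, rfl, rfl⟩ := hdec
  intro s hs
  rcases Finset.mem_insert.1 hs with rfl | hs
  · have H : ∀ x ∈ Ψ', x.der μ := fun x hx => hΨ x (Finset.mem_union_right _ hx)
    clear hΨ hs
    cases h0 with
    | @negF b c A h => exact Der.negF (H (.lf (.bwd c A)) (by simp)) h
    | @negB b c A h => exact Der.negB (H (.lf (.fwd c A)) (by simp)) h
    | @disjF b c d A B h =>
      have h1 : Der μ (.fwd c A) := H (.lf (.fwd c A)) (by simp)
      have h2 : Der μ (.fwd d B) := H (.lf (.fwd d B)) (by simp)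
      exact Der.runion (Der.disjF1 h1) (Der.disjF2 h2) h
    | @disjB b A B =>
      exact Der.disjB (H (.lf (.bwd b A)) (by simp)) (H (.lf (.bwd b B)) (by simp))
    | @conjF b A B =>
      exact Der.conjF (H (.lf (.fwd b A)) (by simp)) (H (.lf (.fwd b B)) (by simp))
    | @conjB b c d A B h =>
      have h1 : Der μ (.bwd c A) := H (.lf (.bwd c A)) (by simp)
      have h2 : Der μ (.bwd d B) := H (.lf (.bwd d B)) (by simp)
      exact Der.rinter (Der.conjB1 h1) (Der.conjB2 h2) h
    | @cntF b c q A h => exact Der.cntF (H (.lf (.fwd c A)) (by simp)) h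
    | @cntB b c q A h => exact Der.cntB (H (.lf (.bwd c A)) (by simp)) h
    | @dntF b c q A h => exact Der.dntF (H (.lf (.bwd c A)) (by simp)) h
    | @dntB b c q A h => exact Der.dntB (H (.lf (.fwd c A)) (by simp)) h
    | muF h => exact Der.muF h
    | muB h => exact Der.muB h
    | dnt0 h => exact (H .falsum (by simp)).elim
    | cnt0 h => exact (H .falsum (by simp)).elim
  · exact hΨ s (Finset.mem_union_left _ hs)
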